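/- Suppose d, n ∈ ℕ are such that 3 ≤ d ≤ n/4 and S ⊆ V satisfies |S| ≤ n/6. Let H be a graph with vertex set S, let F be a bipartite graph with vertex partition (S, V∖S) such that Δ(F ∪ H) ≤ d, and let v ∈ V∖S. For every integer k ≥ 0 let ℱ_k = {G ∈ 𝒢_{n,d} : G[S] = H, F ⊆ G, d_{G,S}(v) − d_F(v) = k}. Then for every k ≥ 0, |ℱ_{k+1}| ≤ (6d|S|/n)/(k+1) · |ℱ_k|. -/

import Mathlib

open scoped Classical BigOperators

noncomputable section

/-- For `k : ℕ`, `ℱ_k` is the set of simple `d`-regular graphs `G` on `n` vertices with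
`G[S] = H`, `F ⊆ G` and `d_{G,S}(v) - d_F(v) = k`. -/
def switchClass (n d : ℕ) (S : Finset (Fin n)) (H F : SimpleGraph (Fin n))
    (v : Fin n) (k : ℕ) : Finset (SimpleGraph (Fin n)) :=
  Finset.univ.filter (fun G : SimpleGraph (Fin n) =>
    (∀ w, G.degree w = d) ∧
    (∀ a b : Fin n, a ∈ S → b ∈ S → (G.Adj a b ↔ H.Adj a b)) ∧
    F ≤ G ∧ (G.neighborFinset v ∩ S).card = F.degree v + k)

/-!
Given `G ∈ ℱ_{k+1}`, choose a neighbour `u ∈ S` of `v` with `uv ∉ F` and an edge `xy` outside `S`,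
and replace `uv`, `xy` by `ux`, `vy`. This keeps all degrees, `G[S]` and `F`, and costs `v` exactly
one neighbour in `S`, so it leads to `ℱ_k`. There are `k + 1` choices of `u`, and at least
`d (n - 2 (|S| + d))` ordered edges `(x, y)` for which the result is a simple graph. Conversely
`G` is recovered from the new graph and `(u, x, y)`, where `u ∈ S` and `x`, `y` are neighbours of
`u`, `v` in the new graph; this leaves at most `|S| d²` possibilities.
-/

open Finset SimpleGraph

theorem card_mul_le_card_mul_of_switch {α β ι : Type*} {s : Finset α} {t : Finset β}
    {A : α → Finset ι} {B : β → Finset ι} {m n : ℕ} (f : α → ι → β)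
    (hm : ∀ a ∈ s, m ≤ #(A a)) (hn : ∀ b ∈ t, #(B b) ≤ n)
    (hf : ∀ a ∈ s, ∀ i ∈ A a, f a i ∈ t ∧ i ∈ B (f a i))
    (hinj : ∀ a ∈ s, ∀ a' ∈ s, ∀ i ∈ A a, i ∈ A a' → f a i = f a' i → a = a') :
    #s * m ≤ #t * n := by
  have hst : #(s.sigma A) ≤ #(t.sigma B) := by
    refine card_le_card_of_injOn (fun p => ⟨f p.1 p.2, p.2⟩) ?_ ?_
    · rintro ⟨a, i⟩ hp
      obtain ⟨ha, hi⟩ := mem_sigma.1 hp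
      exact mem_sigma.2 (hf a ha i hi)
    · rintro ⟨a, i⟩ hp ⟨a', i'⟩ hp' heq
      obtain ⟨hfa, hi⟩ := Sigma.mk.inj heq
      obtain rfl : i = i' := eq_of_heq hi
      obtain ⟨ha, hi⟩ := mem_sigma.1 hp
      obtain ⟨ha', hi'⟩ := mem_sigma.1 hp'
      rw [hinj a ha a' ha' i hi hi' hfa]
  calc #s * m ≤ ∑ a ∈ s, #(A a) := card_nsmul_le_sum s _ m hm
    _ = #(s.sigma A) := (card_sigma s A).symm
    _ ≤ #(t.sigma B) := hst
    _ = ∑ b ∈ t, #(B b) := card_sigma t B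
    _ ≤ #t * n := sum_le_card_nsmul t _ n hn

theorem sdiff_sup_sdiff_sup_cancel {α : Type*} [GeneralizedBooleanAlgebra α] {a b c : α}
    (hb : b ≤ a) (hc : Disjoint a c) : (a \ b ⊔ c) \ c ⊔ b = a := by
  rw [sup_sdiff_right_self, (hc.mono_left sdiff_le).sdiff_eq_left, sdiff_sup_cancel hb]

variable {V : Type*}

section Degree

variable {G A B : SimpleGraph V} {w : V}

theorem degree_sup_of_disjoint [Fintype (A.neighborSet w)] [Fintype (B.neighborSet w)]
    [Fintype ((A ⊔ B).neighborSet w)] (h : Disjoint A B) :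
    (A ⊔ B).degree w = A.degree w + B.degree w := by
  simp_rw [← card_neighborFinset_eq_degree, neighborFinset_sup_of_disjoint w h, card_disjUnion]

theorem degree_sdiff_sup [Fintype (G.neighborSet w)] [Fintype (A.neighborSet w)]
    [Fintype (B.neighborSet w)] [Fintype ((G \ A ⊔ B).neighborSet w)] (hA : A ≤ G)
    (hB : Disjoint G B) (hAB : A.degree w = B.degree w) : (G \ A ⊔ B).degree w = G.degree w := by
  have : Fintype ((G \ A).neighborSet w) :=
    ((Set.toFinite (G.neighborSet w)).subset fun _ => And.left).fintype
  have : Fintype ((G \ A ⊔ A).neighborSet w) := by rwa [sdiff_sup_cancel hA]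
  calc (G \ A ⊔ B).degree w = (G \ A).degree w + B.degree w :=
        degree_sup_of_disjoint (hB.mono_left sdiff_le)
    _ = (G \ A).degree w + A.degree w := by rw [hAB]
    _ = (G \ A ⊔ A).degree w := (degree_sup_of_disjoint disjoint_sdiff_self_left).symm
    _ = G.degree w := by congr!; exact sdiff_sup_cancel hA

theorem degree_edge [DecidableEq V] {u v : V} [Fintype ((edge u v).neighborSet w)] (h : u ≠ v) :
    (edge u v).degree w = (if w = u then 1 else 0) + if w = v then 1 else 0 := by
  have neighbors_eq : (edge u v).neighborFinset w =
      (if w = u then {v} else ∅) ∪ if w = v then {u} else ∅ := by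
    ext b
    simp only [mem_neighborFinset, edge_adj]
    grind
  rw [← card_neighborFinset_eq_degree, neighbors_eq]
  grind

end Degree

/-- The switching of `G` that replaces the edges `uv`, `xy` by the edges `ux`, `vy`. It is defined
for all vertices, but it is meant for those satisfying `IsSwitchable G u v x y`. -/
def edgeSwitch (G : SimpleGraph V) (u v x y : V) : SimpleGraph V :=
  G \ (edge u v ⊔ edge x y) ⊔ (edge u x ⊔ edge v y)

/-- The condition under which replacing `uv`, `xy` by `ux`, `vy` removes two edges of `G` and adds
two new ones. -/
structure IsSwitchable (G : SimpleGraph V) (u v x y : V) : Prop where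
  adj_uv : G.Adj u v
  adj_xy : G.Adj x y
  not_adj_ux : ¬G.Adj u x
  not_adj_vy : ¬G.Adj v y
  ne_ux : u ≠ x
  ne_vy : v ≠ y

namespace IsSwitchable

variable {G : SimpleGraph V} {u v x y : V}

theorem ne_vx (h : IsSwitchable G u v x y) : v ≠ x :=
  fun hvx => h.not_adj_ux (hvx ▸ h.adj_uv)

theorem removed_le (h : IsSwitchable G u v x y) : edge u v ⊔ edge x y ≤ G :=
  sup_le ((edge_le_iff _).2 (.inr h.adj_uv)) ((edge_le_iff _).2 (.inr h.adj_xy))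

theorem disjoint_added (h : IsSwitchable G u v x y) : Disjoint G (edge u x ⊔ edge v y) :=
  disjoint_sup_right.2 ⟨(disjoint_edge _).2 h.not_adj_ux, (disjoint_edge _).2 h.not_adj_vy⟩

theorem edgeSwitch_edgeSwitch (h : IsSwitchable G u v x y) :
    edgeSwitch (edgeSwitch G u v x y) u x v y = G :=
  sdiff_sup_sdiff_sup_cancel h.removed_le h.disjoint_added

theorem degree_edgeSwitch [Fintype V] (h : IsSwitchable G u v x y) (w : V) :
    (edgeSwitch G u v x y).degree w = G.degree w := by
  have disjoint_removed : Disjoint (edge u v) (edge x y) := by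
    simp [disjoint_edge, edge_adj, h.ne_ux.symm, h.ne_vx.symm]
  have disjoint_added : Disjoint (edge u x) (edge v y) := by
    simp [disjoint_edge, edge_adj, h.adj_uv.ne.symm, h.ne_vx]
  have degree_removed_eq : (edge u v ⊔ edge x y).degree w = (edge u x ⊔ edge v y).degree w := by
    rw [degree_sup_of_disjoint disjoint_removed, degree_sup_of_disjoint disjoint_added,
      degree_edge h.adj_uv.ne, degree_edge h.adj_xy.ne, degree_edge h.ne_ux, degree_edge h.ne_vy]
    ring
  convert degree_sdiff_sup h.removed_le h.disjoint_added degree_removed_eq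
  rfl

theorem neighborFinset_edgeSwitch [Fintype V] [DecidableEq V] (h : IsSwitchable G u v x y) :
    (edgeSwitch G u v x y).neighborFinset v = insert y ((G.neighborFinset v).erase u) := by
  have ne_uv := h.adj_uv.ne
  have ne_vx := h.ne_vx
  have ne_vy := h.ne_vy
  ext b
  have ne_of_adj : G.Adj v b → v ≠ b := Adj.ne
  simp only [mem_neighborFinset, mem_insert, mem_erase]
  simp only [edgeSwitch, sup_adj, sdiff_adj, edge_adj]
  grind

end IsSwitchable

theorem edgeSwitch_adj_ux {G : SimpleGraph V} {u v x y : V} (h : u ≠ x) :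
    (edgeSwitch G u v x y).Adj u x := by
  simp [edgeSwitch, edge_adj, h]

theorem edgeSwitch_adj_vy {G : SimpleGraph V} {u v x y : V} (h : v ≠ y) :
    (edgeSwitch G u v x y).Adj v y := by
  simp [edgeSwitch, edge_adj, h]

theorem edgeSwitch_adj_iff_of_mem {G : SimpleGraph V} {S : Set V} {u v x y a b : V}
    (hv : v ∉ S) (hx : x ∉ S) (hy : y ∉ S) (ha : a ∈ S) (hb : b ∈ S) :
    (edgeSwitch G u v x y).Adj a b ↔ G.Adj a b := by
  simp only [edgeSwitch, sup_adj, sdiff_adj, edge_adj]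
  grind

theorem le_edgeSwitch {F G : SimpleGraph V} {u v x y : V} (hFG : F ≤ G)
    (huv : ¬F.Adj u v) (hxy : ¬F.Adj x y) : F ≤ edgeSwitch G u v x y := by
  have disjoint_removed : Disjoint F (edge u v ⊔ edge x y) :=
    disjoint_sup_right.2 ⟨(disjoint_edge _).2 huv, (disjoint_edge _).2 hxy⟩
  exact (le_sdiff.2 ⟨hFG, disjoint_removed⟩).trans le_sup_left

section Count

variable [Fintype V]

theorem card_interedges_univ_right (G : SimpleGraph V) (A : Finset V) :
    #(G.interedges A univ) = ∑ a ∈ A, G.degree a := by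
  have interedges_eq : G.interedges A univ = (A.sigma fun a => G.neighborFinset a).map
      (Equiv.sigmaEquivProd V V).toEmbedding := by
    ext ⟨a, b⟩
    simp [mem_interedges_iff]
  simp [interedges_eq]

theorem degree_mul_card_sub_le_card_interedges_compl [DecidableEq V] {G : SimpleGraph V} {d : ℕ}
    (hG : ∀ w, G.degree w = d) (A B : Finset V) :
    d * (Fintype.card V - (#A + #B)) ≤ #(G.interedges Aᶜ Bᶜ) := by
  have card_left (C : Finset V) : #(G.interedges C univ) = d * #C := by
    simp [card_interedges_univ_right, hG, mul_comm]
  have card_right : #(G.interedges univ B) = d * #B :=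
    (@Rel.card_interedges_comm _ _ _ G.symm univ B).trans (card_left B)
  have cover : G.interedges univ univ ⊆
      G.interedges Aᶜ Bᶜ ∪ (G.interedges A univ ∪ G.interedges univ B) := by
    rintro ⟨a, b⟩
    simp only [mem_union, mem_interedges_iff, mem_compl, mem_univ]
    tauto
  have card_cover := calc
    d * Fintype.card V = #(G.interedges univ univ) := by rw [card_left, card_univ]
    _ ≤ #(G.interedges Aᶜ Bᶜ) + (#(G.interedges A univ) + #(G.interedges univ B)) := by
      grw [card_le_card cover, card_union_le, card_union_le]
    _ = #(G.interedges Aᶜ Bᶜ) + d * (#A + #B) := by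
      rw [card_right, card_left, mul_add]
  rw [Nat.mul_sub]
  omega

/-- The triples `(u, x, y)` along which `G` is switched: `u ∈ S` is a neighbour of `v` with
`uv ∉ F`, and `(x, y)` is an ordered edge outside `S` with `ux`, `vy` non-adjacent and `y ≠ v`.
A triple is encoded as `⟨u, (x, y)⟩`, since the admissible pairs `(x, y)` depend on `u`. -/
def switchings [DecidableEq V] (F G : SimpleGraph V) (S : Finset V) (v : V) :
    Finset (Σ _ : V, V × V) :=
  ((G.neighborFinset v ∩ S) \ F.neighborFinset v).sigma fun u =>
    G.interedges (S ∪ G.neighborFinset u)ᶜ (insert v (S ∪ G.neighborFinset v))ᶜ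

/-- The triples `(u, x, y)` for which `G` may be the result of a switching along `(u, x, y)`. -/
def reverseSwitchings (G : SimpleGraph V) (S : Finset V) (v : V) : Finset (Σ _ : V, V × V) :=
  S.sigma fun u => G.neighborFinset u ×ˢ G.neighborFinset v

theorem card_reverseSwitchings {G : SimpleGraph V} {d : ℕ} (hG : ∀ w, G.degree w = d)
    (S : Finset V) (v : V) : #(reverseSwitchings G S v) = #S * (d * d) := by
  simp [reverseSwitchings, hG]

variable [DecidableEq V] {F G : SimpleGraph V} {S : Finset V} {u v x y : V}

theorem mem_switchings : ⟨u, x, y⟩ ∈ switchings F G S v ↔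
    (u ∈ S ∧ ¬F.Adj u v) ∧ (x ∉ S ∧ y ∉ S) ∧ IsSwitchable G u v x y := by
  simp only [switchings, mem_sigma, mem_sdiff, mem_inter, mem_interedges_iff, mem_compl, mem_insert,
    mem_union, mem_neighborFinset, G.adj_comm v u, F.adj_comm v u]
  constructor
  · rintro ⟨⟨⟨huv, hu⟩, hF⟩, hx, hy, hxy⟩
    push Not at hx hy
    exact ⟨⟨hu, hF⟩, ⟨hx.1, hy.2.1⟩, huv, hxy, hx.2, hy.2.2,
      ne_of_mem_of_not_mem hu hx.1, hy.1.symm⟩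
  · rintro ⟨⟨hu, hF⟩, ⟨hx, hy⟩, h⟩
    exact ⟨⟨⟨h.adj_uv, hu⟩, hF⟩, by simp [hx, h.not_adj_ux],
      by simp [hy, h.not_adj_vy, h.ne_vy.symm], h.adj_xy⟩

theorem mem_reverseSwitchings_edgeSwitch (huxy : ⟨u, x, y⟩ ∈ switchings F G S v) :
    ⟨u, x, y⟩ ∈ reverseSwitchings (edgeSwitch G u v x y) S v := by
  obtain ⟨⟨hu, -⟩, -, h⟩ := mem_switchings.1 huxy
  simpa [reverseSwitchings] using ⟨hu, edgeSwitch_adj_ux h.ne_ux, edgeSwitch_adj_vy h.ne_vy⟩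

theorem mul_le_card_switchings {d : ℕ} (hG : ∀ w, G.degree w = d) :
    #((G.neighborFinset v ∩ S) \ F.neighborFinset v) *
      (d * (Fintype.card V - 2 * (#S + d))) ≤ #(switchings F G S v) := by
  rw [switchings, card_sigma]
  refine card_nsmul_le_sum _ _ _ fun u hu => ?_
  have hu_inter : u ∈ S ∩ G.neighborFinset v :=
    inter_comm S (G.neighborFinset v) ▸ (mem_sdiff.1 hu).1
  have card_left : #(S ∪ G.neighborFinset u) ≤ #S + d := by
    grw [card_union_le, card_neighborFinset_eq_degree, hG]
  -- The common element `u` of `S` and `N(v)` makes up for the extra element `v`.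
  have card_right : #(insert v (S ∪ G.neighborFinset v)) ≤ #S + d := by
    have card_union := card_union_add_card_inter S (G.neighborFinset v)
    have card_inter := card_pos.2 ⟨u, hu_inter⟩
    have card_insert := card_insert_le v (S ∪ G.neighborFinset v)
    rw [card_neighborFinset_eq_degree, hG] at card_union
    omega
  refine le_trans (Nat.mul_le_mul_left d ?_)
    (degree_mul_card_sub_le_card_interedges_compl hG _ _)
  omega

end Count

section SwitchClass

variable {n d k : ℕ} {S : Finset (Fin n)} {H F G : SimpleGraph (Fin n)} {v : Fin n}

theorem mem_switchClass : G ∈ switchClass n d S H F v k ↔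
    (∀ w, G.degree w = d) ∧ (∀ a b, a ∈ S → b ∈ S → (G.Adj a b ↔ H.Adj a b)) ∧
      F ≤ G ∧ #(G.neighborFinset v ∩ S) = F.degree v + k := by
  simp [switchClass]

theorem card_neighborFinset_inter_sdiff (hF : ∀ a b, F.Adj a b → a ∈ S ∨ b ∈ S) (hv : v ∉ S)
    (hG : G ∈ switchClass n d S H F v k) :
    #((G.neighborFinset v ∩ S) \ F.neighborFinset v) = k := by
  obtain ⟨-, -, hFG, hk⟩ := mem_switchClass.1 hG
  have hFS : F.neighborFinset v ⊆ G.neighborFinset v ∩ S := by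
    intro w hw
    rw [mem_neighborFinset] at hw
    simpa using ⟨hFG hw, (hF v w hw).resolve_left hv⟩
  rw [card_sdiff_of_subset hFS, hk, card_neighborFinset_eq_degree, Nat.add_sub_cancel_left]

theorem edgeSwitch_mem_switchClass {u x y : Fin n} (hF : ∀ a b, F.Adj a b → a ∈ S ∨ b ∈ S)
    (hv : v ∉ S) (hG : G ∈ switchClass n d S H F v (k + 1))
    (huxy : ⟨u, x, y⟩ ∈ switchings F G S v) :
    edgeSwitch G u v x y ∈ switchClass n d S H F v k := by
  obtain ⟨⟨hu, huv⟩, ⟨hx, hy⟩, h⟩ := mem_switchings.1 huxy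
  obtain ⟨hdeg, hH, hFG, hk⟩ := mem_switchClass.1 hG
  have hxy : ¬F.Adj x y := fun hxy => (hF x y hxy).elim hx hy
  refine mem_switchClass.2 ⟨fun w => (h.degree_edgeSwitch w).trans (hdeg w), fun a b ha hb => ?_,
    le_edgeSwitch hFG huv hxy, ?_⟩
  · rw [← hH a b ha hb]
    exact edgeSwitch_adj_iff_of_mem (S := S) hv hx hy ha hb
  · have huN : u ∈ G.neighborFinset v ∩ S := by simp [hu, h.adj_uv.symm]
    rw [h.neighborFinset_edgeSwitch, insert_inter_of_notMem hy, erase_inter,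
      card_erase_of_mem huN, hk, ← add_assoc, Nat.add_sub_cancel]

theorem switchClass_zero_succ : switchClass n 0 S H F v (k + 1) = ∅ := by
  refine eq_empty_of_forall_notMem fun G hG => ?_
  obtain ⟨hdeg, -, -, hk⟩ := mem_switchClass.1 hG
  have card_inter_le : #(G.neighborFinset v ∩ S) ≤ 0 := by
    grw [inter_subset_left, card_neighborFinset_eq_degree, hdeg]
  omega

theorem card_switchClass_succ_mul_le (hF : ∀ a b, F.Adj a b → a ∈ S ∨ b ∈ S) (hv : v ∉ S) :
    #(switchClass n d S H F v (k + 1)) * ((k + 1) * (n - 2 * (#S + d))) ≤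
      #(switchClass n d S H F v k) * (#S * d) := by
  obtain rfl | hd := d.eq_zero_or_pos
  · simp [switchClass_zero_succ]
  have double_count : #(switchClass n d S H F v (k + 1)) * ((k + 1) * (d * (n - 2 * (#S + d)))) ≤
      #(switchClass n d S H F v k) * (#S * (d * d)) := by
    refine card_mul_le_card_mul_of_switch
      (A := fun G => switchings F G S v) (B := fun G => reverseSwitchings G S v)
      (fun G t => edgeSwitch G t.1 v t.2.1 t.2.2) (fun G hG => ?_) (fun G hG => ?_)
      (fun G hG t ht => ?_) (fun G _ G' _ t ht ht' heq => ?_)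
    · have card_ge := mul_le_card_switchings (F := F) (S := S) (v := v) (mem_switchClass.1 hG).1
      rwa [card_neighborFinset_inter_sdiff hF hv hG, Fintype.card_fin] at card_ge
    · exact (card_reverseSwitchings (mem_switchClass.1 hG).1 S v).le
    · exact ⟨edgeSwitch_mem_switchClass hF hv hG ht, mem_reverseSwitchings_edgeSwitch ht⟩
    · obtain ⟨-, -, h⟩ := mem_switchings.1 ht
      obtain ⟨-, -, h'⟩ := mem_switchings.1 ht'
      rw [← h.edgeSwitch_edgeSwitch, heq, h'.edgeSwitch_edgeSwitch]
  refine Nat.le_of_mul_le_mul_left (le_trans (le_of_eq ?_) (double_count.trans_eq ?_)) hd <;> ring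

end SwitchClass

theorem statement_7_general (n d : ℕ) (S : Finset (Fin n)) (hSd : 12 * (S.card + d) ≤ 5 * n)
    (H F : SimpleGraph (Fin n)) (hF : ∀ a b : Fin n, F.Adj a b → a ∈ S ∨ b ∈ S)
    (v : Fin n) (hv : v ∉ S) (k : ℕ) :
    ((switchClass n d S H F v (k + 1)).card : ℝ)
      ≤ (6 * (d : ℝ) * (S.card : ℝ) / (n : ℝ)) / ((k : ℝ) + 1) *
        ((switchClass n d S H F v k).card : ℝ) := by
  have hn : 0 < n := v.pos
  have sixth_le : n ≤ 6 * (n - 2 * (#S + d)) := by omega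
  have key : #(switchClass n d S H F v (k + 1)) * (n * (k + 1)) ≤
      6 * d * #S * #(switchClass n d S H F v k) := calc
    _ ≤ #(switchClass n d S H F v (k + 1)) * (6 * (n - 2 * (#S + d)) * (k + 1)) := by gcongr
    _ = 6 * (#(switchClass n d S H F v (k + 1)) * ((k + 1) * (n - 2 * (#S + d)))) := by ring
    _ ≤ 6 * (#(switchClass n d S H F v k) * (#S * d)) :=
      Nat.mul_le_mul_left 6 (card_switchClass_succ_mul_le hF hv)
    _ = 6 * d * #S * #(switchClass n d S H F v k) := by ring
  rw [div_div, div_mul_eq_mul_div, le_div_iff₀ (by positivity)]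
  exact_mod_cast key

/-- **Key switching inequality in Lemma 3.2:** `|ℱ_{k+1}| ≤ (6d|S|/n)/(k+1) · |ℱ_k|`. -/
theorem statement_7 (n d : ℕ) (hd : 3 ≤ d) (hdn : 4 * d ≤ n)
    (S : Finset (Fin n)) (hS : 6 * S.card ≤ n)
    (H : SimpleGraph (Fin n)) (hH : ∀ a b : Fin n, H.Adj a b → a ∈ S ∧ b ∈ S)
    (F : SimpleGraph (Fin n))
    (hF : ∀ a b : Fin n, F.Adj a b → (a ∈ S ∧ b ∉ S) ∨ (a ∉ S ∧ b ∈ S))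
    (hΔ : ∀ w : Fin n, (F ⊔ H).degree w ≤ d)
    (v : Fin n) (hv : v ∉ S) (k : ℕ) :
    ((switchClass n d S H F v (k + 1)).card : ℝ)
      ≤ (6 * (d : ℝ) * (S.card : ℝ) / (n : ℝ)) / ((k : ℝ) + 1) *
        ((switchClass n d S H F v k).card : ℝ) :=
  statement_7_general n d S (by lia) H F (fun a b hab => (hF a b hab).imp And.left And.right) v hv k
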